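/- Let Ω ⊂ ℝ^d be a nonempty bounded open set, let T : ℝ^d → ℝ be continuous on the closure cl(Ω) and twice differentiable at every point of Ω, let k : ℝ → ℝ be differentiable, and let f : ℝ^d → ℝ. Assume that for every x ∈ Ω one has k(T(x)) > 0, f(x) > 0, and the stationary heat equation with temperature-dependent conductivity holds in expanded form: k'(T(x))·‖∇T(x)‖² + k(T(x))·ΔT(x) = -f(x). Then the minimum of T over cl(Ω) is attained on the boundary: there exists y ∈ ∂Ω such that T(y) ≤ T(x) for all x ∈ cl(Ω). -/

import Mathlib

open Set

/-- The Laplacian of `T : ℝ^d → ℝ` at `x`: the sum of second directional derivatives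
along the standard orthonormal basis of `EuclideanSpace ℝ (Fin d)`. -/
noncomputable def laplacian {d : ℕ} (T : EuclideanSpace ℝ (Fin d) → ℝ)
    (x : EuclideanSpace ℝ (Fin d)) : ℝ :=
  ∑ i : Fin d,
    fderiv ℝ (fun y => fderiv ℝ T y (EuclideanSpace.single i 1)) x (EuclideanSpace.single i 1)

/-!
The closure of `Ω` is compact, so `T` attains its minimum there; it suffices to exclude a minimum
at a point of `Ω`. At such a point the gradient vanishes, hence so does the term
`k'(T)‖∇T‖²`, while restricting `T` to lines shows that the Laplacian is nonnegative. The left-hand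
side of the equation is then nonnegative, contradicting `-f < 0`.
-/

open Topology

theorem exists_isMinOn_diff_of_forall_not_isLocalMin {X α : Type*} [TopologicalSpace X]
    [LinearOrder α] [TopologicalSpace α] [ClosedIicTopology α] {K U : Set X} {g : X → α}
    (hK : IsCompact K) (hKne : K.Nonempty) (hg : ContinuousOn g K) (hU : IsOpen U) (hUK : U ⊆ K)
    (hmin : ∀ x ∈ U, ¬IsLocalMin g x) : ∃ y ∈ K \ U, IsMinOn g K y := by
  obtain ⟨y, hyK, hy⟩ := hK.exists_isMinOn hKne hg
  exact ⟨y, ⟨hyK, fun hyU => hmin y hyU ((hy.on_subset hUK).isLocalMin (hU.mem_nhds hyU))⟩, hy⟩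

/- If `g''(a) < 0`, the second derivative test makes `a` a local maximum as well, so `g` is
locally constant and `g''(a) = 0`. -/
theorem deriv_deriv_nonneg_of_isLocalMin {g : ℝ → ℝ} {a : ℝ} (hmin : IsLocalMin g a)
    (hg : ContinuousAt g a) : 0 ≤ deriv (deriv g) a := by
  by_contra! hneg
  have hmax : IsLocalMax g a := isLocalMax_of_deriv_deriv_neg hneg hmin.deriv_eq_zero hg
  have hconst : g =ᶠ[𝓝 a] fun _ => g a := by
    filter_upwards [hmin, hmax] with t hge hle using le_antisymm hle hge
  have hzero : deriv (deriv g) a = 0 := by simpa using hconst.deriv.deriv_eq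
  exact hneg.ne hzero

theorem deriv_comp_add_smul_eq_lineDeriv {𝕜 E F : Type*} [NontriviallyNormedField 𝕜]
    [AddCommGroup E] [Module 𝕜 E] [NormedAddCommGroup F] [NormedSpace 𝕜 F]
    (T : E → F) (x v : E) (t : 𝕜) :
    deriv (fun s : 𝕜 => T (x + s • v)) t = lineDeriv 𝕜 T (x + t • v) v := by
  simpa only [lineDeriv, add_smul, add_assoc, add_zero] using
    (deriv_comp_const_add (fun s : 𝕜 => T (x + s • v)) t 0).symm

theorem lineDeriv_lineDeriv_nonneg_of_isLocalMin {E : Type*} [AddCommGroup E] [Module ℝ E]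
    [TopologicalSpace E] [ContinuousAdd E] [ContinuousSMul ℝ E] {T : E → ℝ} {x : E}
    (hmin : IsLocalMin T x) (hT : ContinuousAt T x) (v : E) :
    0 ≤ lineDeriv ℝ (fun y => lineDeriv ℝ T y v) x v := by
  have hline : ContinuousAt (fun t : ℝ => x + t • v) 0 := by fun_prop
  have hbase : x + (0 : ℝ) • v = x := by simp
  have hmin_line : IsLocalMin (fun t : ℝ => T (x + t • v)) 0 := by
    rw [← hbase] at hmin
    exact hmin.comp_continuous (g := fun t : ℝ => x + t • v) hline
  have hT_line : ContinuousAt (fun t : ℝ => T (x + t • v)) 0 := hT.comp_of_eq hline hbase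
  calc
    0 ≤ deriv (deriv fun t : ℝ => T (x + t • v)) 0 :=
      deriv_deriv_nonneg_of_isLocalMin hmin_line hT_line
    _ = lineDeriv ℝ (fun y => lineDeriv ℝ T y v) x v := by
      rw [funext (deriv_comp_add_smul_eq_lineDeriv T x v), lineDeriv]

theorem fderiv_fderiv_apply_nonneg_of_isLocalMin {E : Type*} [NormedAddCommGroup E]
    [NormedSpace ℝ E] {T : E → ℝ} {x : E} (hmin : IsLocalMin T x)
    (hT : ∀ᶠ y in 𝓝 x, DifferentiableAt ℝ T y) (v : E)
    (hT' : DifferentiableAt ℝ (fun y => fderiv ℝ T y v) x) :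
    0 ≤ fderiv ℝ (fun y => fderiv ℝ T y v) x v := by
  have hlineDeriv : (fun y => lineDeriv ℝ T y v) =ᶠ[𝓝 x] fun y => fderiv ℝ T y v :=
    hT.mono fun _ hy => hy.lineDeriv_eq_fderiv
  calc
    0 ≤ lineDeriv ℝ (fun y => lineDeriv ℝ T y v) x v :=
      lineDeriv_lineDeriv_nonneg_of_isLocalMin hmin hT.self_of_nhds.continuousAt v
    _ = lineDeriv ℝ (fun y => fderiv ℝ T y v) x v := hlineDeriv.lineDeriv_eq
    _ = fderiv ℝ (fun y => fderiv ℝ T y v) x v := hT'.lineDeriv_eq_fderiv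

theorem gradient_eq_zero_of_isLocalMin {E : Type*} [NormedAddCommGroup E] [InnerProductSpace ℝ E]
    [CompleteSpace E] {T : E → ℝ} {x : E} (hmin : IsLocalMin T x) : gradient T x = 0 := by
  rw [gradient, hmin.fderiv_eq_zero, map_zero]

theorem laplacian_nonneg_of_isLocalMin {d : ℕ} {T : EuclideanSpace ℝ (Fin d) → ℝ}
    {x : EuclideanSpace ℝ (Fin d)} (hmin : IsLocalMin T x)
    (hT : ∀ᶠ y in 𝓝 x, DifferentiableAt ℝ T y) (hT' : DifferentiableAt ℝ (fderiv ℝ T) x) :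
    0 ≤ laplacian T x :=
  Finset.sum_nonneg fun i _ => fderiv_fderiv_apply_nonneg_of_isLocalMin hmin hT
    (EuclideanSpace.single i 1) (hT'.clm_apply (differentiableAt_const _))

theorem minimum_principle_temperature_dependent_conductivity_general
    {d : ℕ} {Ω : Set (EuclideanSpace ℝ (Fin d))}
    (hΩne : Ω.Nonempty) (hΩopen : IsOpen Ω) (hΩbdd : Bornology.IsBounded Ω)
    {T a : EuclideanSpace ℝ (Fin d) → ℝ}
    {H : EuclideanSpace ℝ (Fin d) → EuclideanSpace ℝ (Fin d) → ℝ}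
    (hTcont : ContinuousOn T (closure Ω))
    (hT2 : ∀ x ∈ Ω, DifferentiableAt ℝ T x ∧ DifferentiableAt ℝ (fderiv ℝ T) x)
    (ha : ∀ x ∈ Ω, 0 ≤ a x) (hH : ∀ x ∈ Ω, 0 ≤ H x 0)
    (hsuper : ∀ x ∈ Ω, H x (gradient T x) + a x * laplacian T x < 0) :
    ∃ y ∈ closure Ω \ Ω, ∀ x ∈ closure Ω, T y ≤ T x := by
  refine exists_isMinOn_diff_of_forall_not_isLocalMin hΩbdd.isCompact_closure hΩne.closure hTcont
    hΩopen subset_closure fun x hx hmin => (hsuper x hx).not_ge ?_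
  have hT : ∀ᶠ y in 𝓝 x, DifferentiableAt ℝ T y :=
    (hΩopen.eventually_mem hx).mono fun y hy => (hT2 y hy).1
  have hlaplacian : 0 ≤ laplacian T x := laplacian_nonneg_of_isLocalMin hmin hT (hT2 x hx).2
  rw [gradient_eq_zero_of_isLocalMin hmin]
  exact add_nonneg (hH x hx) (mul_nonneg (ha x hx) hlaplacian)

/-- Minimum principle for the stationary heat equation with temperature-dependent
conductivity: if `k(T) > 0`, `f > 0` and
`k'(T)‖∇T‖² + k(T)ΔT = -f` on a nonempty bounded open set `Ω`, then the minimum of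
`T` over `cl(Ω)` is attained on the boundary `cl(Ω) \ Ω`. -/
theorem minimum_principle_temperature_dependent_conductivity
    {d : ℕ} {Ω : Set (EuclideanSpace ℝ (Fin d))}
    (hΩne : Ω.Nonempty) (hΩopen : IsOpen Ω) (hΩbdd : Bornology.IsBounded Ω)
    {T : EuclideanSpace ℝ (Fin d) → ℝ} {k : ℝ → ℝ} {f : EuclideanSpace ℝ (Fin d) → ℝ}
    (hTcont : ContinuousOn T (closure Ω))
    (hT2 : ∀ x ∈ Ω, DifferentiableAt ℝ T x ∧ DifferentiableAt ℝ (fderiv ℝ T) x)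
    (hk : Differentiable ℝ k)
    (hkpos : ∀ x ∈ Ω, 0 < k (T x))
    (hfpos : ∀ x ∈ Ω, 0 < f x)
    (heq : ∀ x ∈ Ω,
      deriv k (T x) * ‖gradient T x‖ ^ 2 + k (T x) * laplacian T x = -f x) :
    ∃ y ∈ closure Ω \ Ω, ∀ x ∈ closure Ω, T y ≤ T x := by
  exact minimum_principle_temperature_dependent_conductivity_general
    (H := fun x p => deriv k (T x) * ‖p‖ ^ 2) hΩne hΩopen hΩbdd hTcont hT2
    (fun x hx => (hkpos x hx).le) (by simp) fun x hx => by linarith [heq x hx, hfpos x hx]
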